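/- Let n ∈ ℕ with n ≥ 2, p ∈ ℕ, and 0 < α < 2. Assume g ∈ C_c^N(ℝ^n) with N ≥ max(2p+2, n+1) and ∂^k g(0) = 0 for all k ∈ ℕ₀^n with |k|₁ ≤ 2p−1 (including k = 0). Then there exists a constant C > 0 such that for all 0 < h ≤ 1: | ∫_{ℝ^n} g(x) s_{12}(x) dx − T_h^0[g·s_{12}] | ≤ C h^{2p+2−α}. -/

import Mathlib

open MeasureTheory Real

noncomputable def euclNorm {n : ℕ} (x : Fin n → ℝ) : ℝ := Real.sqrt (∑ j, x j ^ 2)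

noncomputable def pd {n : ℕ} (j : Fin n) (f : (Fin n → ℝ) → ℝ) : (Fin n → ℝ) → ℝ :=
  fun x => fderiv ℝ f x (Pi.single j 1)

noncomputable def md {n : ℕ} (γ : Fin n → ℕ) (f : (Fin n → ℝ) → ℝ) : (Fin n → ℝ) → ℝ :=
  (List.finRange n).foldr (fun j g => (pd j)^[γ j] g) f

noncomputable def trap {n : ℕ} (h : ℝ) (f : (Fin n → ℝ) → ℝ) : ℝ :=
  h ^ n * ∑' β : {β : Fin n → ℤ // β ≠ 0}, f (fun j => (β.1 j : ℝ) * h)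

/-!
Substituting `x = h y` and dividing by a power of `h` turns the integrand, a flat function times a
homogeneous kernel, into a function obeying derivative bounds `‖D^i F(y)‖ ≤ C ‖y‖ ^ (σ - n - i)`
with `C` independent of `h`, where `σ = 2 p + 2 - α`. It then suffices to bound the error of the
unit-step rule for such `F` by a multiple of `C`. On every unit cell the integral is compared with
one translate of a tensor product quadrature rule, exact on polynomials of coordinate degrees less
than `M = 2 p + 2`, whose nodes are lattice points and whose weights sum to `1`: summed over all
cells, the translated rules give exactly the lattice sum. By Taylor's theorem the error on the cell
at a distant `k` is `O(‖k‖ ^ (σ - n - M))`, which is summable since `σ < M`; on the finitely many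
remaining cells it is controlled by the integrable function `‖y‖ ^ (σ - n)`.
-/

section PowerBound

variable {E : Type*} [NormedAddCommGroup E] [NormedSpace ℝ E]

/-- `f` is `C^M` away from the origin and `‖D^i f(x)‖ ≤ C ‖x‖ ^ (r - i)` for all `i ≤ M`, as for a
homogeneous function of degree `r`. Nothing is required of `f 0`. -/
structure HasPowerBound (M : ℕ) (r C : ℝ) (f : E → ℝ) : Prop where
  contDiffAt : ∀ x ≠ 0, ContDiffAt ℝ M f x
  norm_iteratedFDeriv_le : ∀ i ≤ M, ∀ x ≠ 0, ‖iteratedFDeriv ℝ i f x‖ ≤ C * ‖x‖ ^ (r - i)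

theorem norm_iteratedFDeriv_comp_smul (f : E → ℝ) {t : ℝ} (ht : t ≠ 0) (i : ℕ) (x : E) :
    ‖iteratedFDeriv ℝ i (fun y => f (t • y)) x‖ = |t| ^ i * ‖iteratedFDeriv ℝ i f (t • x)‖ := by
  let e : E ≃L[ℝ] E := ContinuousLinearEquiv.smulLeft (Units.mk0 t ht)
  have h_comp : iteratedFDeriv ℝ i (fun y => f (t • y)) x =
      (iteratedFDeriv ℝ i f (t • x)).compContinuousLinearMap fun _ => (e : E →L[ℝ] E) := by
    have h_within := e.iteratedFDerivWithin_comp_right f uniqueDiffOn_univ (Set.mem_univ (e x)) i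
    rwa [Set.preimage_univ, iteratedFDerivWithin_univ, iteratedFDerivWithin_univ] at h_within
  have h_smul : ((iteratedFDeriv ℝ i f (t • x)).compContinuousLinearMap
      fun _ => (e : E →L[ℝ] E)) = t ^ i • iteratedFDeriv ℝ i f (t • x) := by
    ext v
    exact ((iteratedFDeriv ℝ i f (t • x)).map_smul_univ (fun _ => t) v).trans (by simp)
  rw [h_comp, h_smul, norm_smul, norm_pow, Real.norm_eq_abs]

namespace HasPowerBound

variable {M : ℕ} {r s C D : ℝ} {f g : E → ℝ}

theorem contDiffOn (hf : HasPowerBound M r C f) : ContDiffOn ℝ M f {0}ᶜ :=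
  fun x hx => (hf.contDiffAt x hx).contDiffWithinAt

theorem abs_le (hf : HasPowerBound M r C f) {x : E} (hx : x ≠ 0) : |f x| ≤ C * ‖x‖ ^ r := by
  simpa using hf.norm_iteratedFDeriv_le 0 (Nat.zero_le M) x hx

theorem nonneg [Nontrivial E] (hf : HasPowerBound M r C f) : 0 ≤ C := by
  obtain ⟨x, hx⟩ := exists_ne (0 : E)
  have hx_pow : 0 < ‖x‖ ^ r := Real.rpow_pos_of_pos (norm_pos_iff.2 hx) r
  exact nonneg_of_mul_nonneg_left ((abs_nonneg _).trans (hf.abs_le hx)) hx_pow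

theorem mul (hf : HasPowerBound M r C f) (hg : HasPowerBound M s D g) :
    HasPowerBound M (r + s) (2 ^ M * (C * D)) (fun x => f x * g x) where
  contDiffAt x hx := (hf.contDiffAt x hx).mul (hg.contDiffAt x hx)
  norm_iteratedFDeriv_le i hi x hx := by
    have : Nontrivial E := ⟨x, 0, hx⟩
    have hCD : 0 ≤ C * D := mul_nonneg hf.nonneg hg.nonneg
    have h_term : ∀ k ∈ Finset.range (i + 1),
        i.choose k * ‖iteratedFDeriv ℝ k f x‖ * ‖iteratedFDeriv ℝ (i - k) g x‖ ≤
          i.choose k * (C * D * ‖x‖ ^ (r + s - i)) := by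
      intro k hk
      have hki : k ≤ i := Nat.lt_succ_iff.1 (Finset.mem_range.1 hk)
      have h_exp : r + s - i = (r - k) + (s - (i - k : ℕ)) := by
        rw [Nat.cast_sub hki]; ring
      have hfk := hf.norm_iteratedFDeriv_le k (hki.trans hi) x hx
      have hgk := hg.norm_iteratedFDeriv_le (i - k) ((Nat.sub_le i k).trans hi) x hx
      rw [mul_assoc, h_exp, Real.rpow_add (norm_pos_iff.2 hx), mul_mul_mul_comm]
      gcongr
      exact (norm_nonneg _).trans hfk
    have h_open : IsOpen ({0}ᶜ : Set E) := isOpen_compl_singleton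
    have hx_mem : x ∈ ({0}ᶜ : Set E) := hx
    have h_leibniz := norm_iteratedFDerivWithin_mul_le (n := i) hf.contDiffOn hg.contDiffOn
      h_open.uniqueDiffOn hx_mem (Nat.cast_le.2 hi)
    simp only [iteratedFDerivWithin_of_isOpen _ h_open hx_mem] at h_leibniz
    calc ‖iteratedFDeriv ℝ i (fun x => f x * g x) x‖
        ≤ ∑ k ∈ Finset.range (i + 1), (i.choose k : ℝ) * (C * D * ‖x‖ ^ (r + s - i)) :=
          h_leibniz.trans (Finset.sum_le_sum h_term)
      _ = 2 ^ i * (C * D) * ‖x‖ ^ (r + s - i) := by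
          rw [← Finset.sum_mul, ← Nat.cast_sum, Nat.sum_range_choose]
          push_cast
          ring
      _ ≤ 2 ^ M * (C * D) * ‖x‖ ^ (r + s - i) := by
          gcongr
          norm_num

theorem rescale (hf : HasPowerBound M r C f) {h : ℝ} (hh : 0 < h) :
    HasPowerBound M r C (fun x => h ^ (-r) * f (h • x)) := by
  have h_contDiffAt : ∀ x ≠ 0, ContDiffAt ℝ M (fun x => f (h • x)) x := fun x hx =>
    (hf.contDiffAt (h • x) (smul_ne_zero hh.ne' hx)).comp x (by fun_prop)
  refine ⟨fun x hx => contDiffAt_const.mul (h_contDiffAt x hx), fun i hi x hx => ?_⟩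
  have h_bound := hf.norm_iteratedFDeriv_le i hi (h • x) (smul_ne_zero hh.ne' hx)
  simp only [← smul_eq_mul (h ^ (-r))]
  rw [iteratedFDeriv_const_smul_apply' ((h_contDiffAt x hx).of_le (Nat.cast_le.2 hi)), norm_smul,
    norm_iteratedFDeriv_comp_smul f hh.ne', Real.norm_of_nonneg (by positivity), abs_of_pos hh]
  calc h ^ (-r) * (h ^ i * ‖iteratedFDeriv ℝ i f (h • x)‖)
      ≤ h ^ (-r) * (h ^ i * (C * ‖h • x‖ ^ (r - i))) := by gcongr
    _ = C * ‖x‖ ^ (r - i) := by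
        rw [norm_smul, Real.norm_of_nonneg hh.le, Real.mul_rpow hh.le (norm_nonneg x),
          Real.rpow_neg hh.le, Real.rpow_sub hh, Real.rpow_natCast]
        field_simp

theorem integrable [FiniteDimensional ℝ E] [Nontrivial E] [MeasurableSpace E] [BorelSpace E]
    {μ : Measure E} [μ.IsAddHaarMeasure] (hf : HasPowerBound M r C f) (hfc : HasCompactSupport f)
    (hr : -(Module.finrank ℝ E : ℝ) < r) : Integrable f μ := by
  have h_meas : AEStronglyMeasurable f μ := by
    rw [← restrict_compl_singleton (μ := μ) (0 : E)]
    exact hf.contDiffOn.continuousOn.aestronglyMeasurable (measurableSet_singleton (0 : E)).compl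
  have h_decay : ∀ᵐ x ∂μ, ‖f x‖ ≤ C * ‖x‖ ^ (-(-r)) := by
    filter_upwards [Measure.ae_ne μ 0] with x hx
    simpa only [neg_neg, Real.norm_eq_abs] using hf.abs_le hx
  have h_loc : LocallyIntegrable f μ :=
    locallyIntegrable_of_norm_le_rpow Module.finrank_pos (by linarith) h_decay h_meas
  exact (integrableOn_iff_integrable_of_support_subset (subset_tsupport f)).1
    (h_loc.integrableOn_isCompact hfc)

end HasPowerBound

/-- Homogeneity reduces the bounds to the unit sphere, which is compact. -/
theorem exists_hasPowerBound_of_homogeneous [FiniteDimensional ℝ E] {M : ℕ} {r : ℝ} {s : E → ℝ}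
    (hs : ∀ x ≠ 0, ContDiffAt ℝ M s x) (h_hom : ∀ t > 0, ∀ x, s (t • x) = t ^ r * s x) :
    ∃ C, HasPowerBound M r C s := by
  have h_sphere : ∀ i ≤ M, ∃ C, ∀ u ∈ Metric.sphere (0 : E) 1, ‖iteratedFDeriv ℝ i s u‖ ≤ C := by
    intro i hi
    refine (isCompact_sphere (0 : E) 1).exists_bound_of_continuousOn fun u hu => ?_
    exact ((hs u (ne_zero_of_mem_unit_sphere ⟨u, hu⟩)).continuousAt_iteratedFDeriv
      (Nat.cast_le.2 hi)).continuousWithinAt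
  choose! c hc using h_sphere
  obtain ⟨C, hC⟩ := ((Finset.range (M + 1)).image c).exists_le
  refine ⟨C, hs, fun i hi x hx => ?_⟩
  have hx_pos : 0 < ‖x‖ := norm_pos_iff.2 hx
  have h_mem : ‖x‖⁻¹ • x ∈ Metric.sphere (0 : E) 1 := by
    simp [norm_smul, hx_pos.ne']
  have h_le : ‖iteratedFDeriv ℝ i s (‖x‖⁻¹ • x)‖ ≤ C := (hc i hi _ h_mem).trans
    (hC _ (Finset.mem_image_of_mem c (Finset.mem_range.2 (Nat.lt_succ_of_le hi))))
  have h_scale := norm_iteratedFDeriv_comp_smul s hx_pos.ne' i (‖x‖⁻¹ • x)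
  have h_contDiffAt : ContDiffAt ℝ i s (‖x‖⁻¹ • x) :=
    (hs _ (ne_zero_of_mem_unit_sphere ⟨_, h_mem⟩)).of_le (Nat.cast_le.2 hi)
  simp only [h_hom _ hx_pos, ← smul_eq_mul (‖x‖ ^ r)] at h_scale
  rw [iteratedFDeriv_const_smul_apply' h_contDiffAt, norm_smul, smul_inv_smul₀ hx_pos.ne',
    Real.norm_of_nonneg (by positivity), abs_norm] at h_scale
  rw [Real.rpow_sub hx_pos, Real.rpow_natCast, mul_div_assoc', le_div_iff₀ (by positivity),
    mul_comm, ← h_scale, mul_comm]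
  gcongr

end PowerBound

section Quadrature

/-- The weights of the quadrature rule on `[0, 1]` with nodes `0, 1, …, M - 1` that is exact on
polynomials of degree less than `M`. The nodes are integers, most of them outside `[0, 1]`, so that
all integer translates of the rule only sample the integer lattice. -/
def IsInterpolatory {M : ℕ} (w : Fin M → ℝ) : Prop :=
  ∀ m < M, ∑ j, w j * (j : ℝ) ^ m = ∫ t in (0 : ℝ)..1, t ^ m

theorem exists_isInterpolatory (M : ℕ) : ∃ w : Fin M → ℝ, IsInterpolatory w := by
  have h_unit : IsUnit (Matrix.vandermonde fun j : Fin M => (j : ℝ)) := by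
    rw [Matrix.isUnit_iff_isUnit_det, isUnit_iff_ne_zero, Matrix.det_vandermonde_ne_zero_iff]
    exact Nat.cast_injective.comp Fin.val_injective
  obtain ⟨w, hw⟩ := Matrix.vecMul_surjective_iff_isUnit.2 h_unit
    fun m => ∫ t in (0 : ℝ)..1, t ^ (m : ℕ)
  exact ⟨w, fun m hm => congrFun hw ⟨m, hm⟩⟩

variable {ι : Type*}

/-- The half-open unit cube, whose integer translates tile the space. -/
def unitCube (ι : Type*) : Set (ι → ℝ) := Set.univ.pi fun _ => Set.Ico 0 1

theorem unitCube_subset_Icc : unitCube ι ⊆ Set.Icc 0 1 :=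
  fun _ hv => ⟨fun i => (hv i trivial).1, fun i => (hv i trivial).2.le⟩

theorem measurableSet_unitCube [Countable ι] : MeasurableSet (unitCube ι) :=
  MeasurableSet.univ_pi fun _ => measurableSet_Ico

variable [Fintype ι]

theorem volume_unitCube : volume (unitCube ι) = 1 := by
  simp [unitCube, volume_pi_pi]

theorem norm_le_one_of_mem_unitCube {v : ι → ℝ} (hv : v ∈ unitCube ι) : ‖v‖ ≤ 1 := by
  refine (pi_norm_le_iff_of_nonneg zero_le_one).2 fun i => ?_
  rw [Real.norm_of_nonneg (hv i trivial).1]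
  exact (hv i trivial).2.le

theorem integrableOn_unitCube_norm_add_rpow [Nonempty ι] {r : ℝ}
    (hr : -(Fintype.card ι : ℝ) < r) (a : ι → ℝ) :
    IntegrableOn (fun v => ‖a + v‖ ^ r) (unitCube ι) := by
  have h_loc : LocallyIntegrable (fun y : ι → ℝ => ‖y‖ ^ r) volume := by
    refine locallyIntegrable_of_norm_le_rpow (C := 1) (α := -r) Module.finrank_pos
      (by rw [Module.finrank_fintype_fun_eq_card]; linarith)
      (Filter.Eventually.of_forall fun x => ?_) (Measurable.aestronglyMeasurable (by fun_prop))
    rw [neg_neg, one_mul, Real.norm_of_nonneg (by positivity)]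
  have h_ball := ((measurePreserving_add_left volume a).integrableOn_comp_preimage
    (measurableEmbedding_addLeft a)).2
      (h_loc.integrableOn_isCompact (isCompact_closedBall 0 (‖a‖ + 1)))
  refine h_ball.mono_set fun v hv => mem_closedBall_zero_iff.2 ?_
  exact (norm_add_le a v).trans (by gcongr; exact norm_le_one_of_mem_unitCube hv)

variable [DecidableEq ι] {M : ℕ} {w : Fin M → ℝ} {f g : (ι → ℝ) → ℝ}

/-- The tensor product rule for the unit cube, with weights `∏ i, w (J i)` at the integer nodes
`J ∈ {0, …, M - 1} ^ ι`. -/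
def cubeRule (w : Fin M → ℝ) (f : (ι → ℝ) → ℝ) : ℝ :=
  ∑ J : ι → Fin M, (∏ i, w (J i)) * f fun i => ((J i : ℕ) : ℝ)

theorem cubeRule_const_mul (c : ℝ) : cubeRule w (fun v => c * f v) = c * cubeRule w f := by
  simp only [cubeRule, Finset.mul_sum, mul_left_comm]

theorem cubeRule_sub : cubeRule w (fun v => f v - g v) = cubeRule w f - cubeRule w g := by
  simp only [cubeRule, mul_sub, Finset.sum_sub_distrib]

theorem abs_cubeRule_le (h : ∀ v, ‖v‖ ≤ M → |f v| ≤ g v) :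
    |cubeRule w f| ≤ cubeRule (fun j => |w j|) g := by
  refine (Finset.abs_sum_le_sum_abs _ _).trans (Finset.sum_le_sum fun J _ => ?_)
  rw [abs_mul, Finset.abs_prod]
  gcongr
  refine h _ ((pi_norm_le_iff_of_nonneg M.cast_nonneg).2 fun i => ?_)
  simp

/-- The rule with one-dimensional weights `w` integrates `f` exactly over the unit cube. -/
structure CubeRuleExact (w : Fin M → ℝ) (f : (ι → ℝ) → ℝ) : Prop where
  integrableOn : IntegrableOn f (unitCube ι)
  integral_eq : ∫ v in unitCube ι, f v = cubeRule w f

namespace CubeRuleExact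

theorem const_mul (c : ℝ) (hf : CubeRuleExact w f) : CubeRuleExact w fun v => c * f v :=
  ⟨hf.integrableOn.const_mul c, by rw [integral_const_mul, hf.integral_eq, cubeRule_const_mul]⟩

theorem sum {κ : Type*} {s : Finset κ} {f : κ → (ι → ℝ) → ℝ}
    (hf : ∀ k ∈ s, CubeRuleExact w (f k)) : CubeRuleExact w fun v => ∑ k ∈ s, f k v where
  integrableOn := integrable_finsetSum s fun k hk => (hf k hk).integrableOn
  integral_eq := by
    rw [integral_finsetSum s fun k hk => (hf k hk).integrableOn,
      Finset.sum_congr rfl fun k hk => (hf k hk).integral_eq]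
    simp only [cubeRule, Finset.mul_sum]
    exact Finset.sum_comm

end CubeRuleExact

namespace IsInterpolatory

theorem cubeRuleExact_monomial (hw : IsInterpolatory w) {e : ι → ℕ} (he : ∀ i, e i < M) :
    CubeRuleExact w fun v => ∏ i, v i ^ e i where
  integrableOn := (Continuous.integrableOn_Icc (by fun_prop)).mono_set unitCube_subset_Icc
  integral_eq := by
    rw [unitCube, volume_pi, Measure.restrict_pi_pi,
      integral_fintype_prod_eq_prod fun i (t : ℝ) => t ^ e i]
    simp only [cubeRule, ← Finset.prod_mul_distrib]
    rw [← Fintype.prod_sum fun i (j : Fin M) => w j * (j : ℝ) ^ e i]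
    refine Finset.prod_congr rfl fun i _ => ?_
    rw [hw _ (he i), intervalIntegral.integral_of_le zero_le_one, integral_Ico_eq_integral_Ioc]

theorem cubeRule_one (hw : IsInterpolatory w) (hM : 0 < M) :
    cubeRule w (fun _ : ι → ℝ => 1) = 1 := by
  have h_exact := hw.cubeRuleExact_monomial (e := fun _ : ι => 0) fun _ => hM
  simp only [pow_zero, Finset.prod_const_one] at h_exact
  rw [← h_exact.integral_eq]
  simp [Measure.real, volume_unitCube]

theorem cubeRuleExact_multilinear (hw : IsInterpolatory w) {k : ℕ} (hk : k < M)
    (A : ContinuousMultilinearMap ℝ (fun _ : Fin k => ι → ℝ) ℝ) :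
    CubeRuleExact w fun v => A fun _ => v := by
  have h_expand : ∀ v, A (fun _ => v) = ∑ b : Fin k → ι,
      A (fun l => Pi.single (b l) 1) * ∏ i, v i ^ (Finset.univ.filter fun l => b l = i).card := by
    intro v
    conv_lhs => rw [pi_eq_sum_univ' v]
    refine (A.toMultilinearMap.map_sum _).trans (Finset.sum_congr rfl fun b _ => ?_)
    refine (A.toMultilinearMap.map_smul_univ (fun l => v (b l)) _).trans ?_
    rw [smul_eq_mul, mul_comm, ← Finset.prod_fiberwise' Finset.univ b v]
    simp only [Finset.prod_const]
    rfl
  simp only [h_expand]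
  refine CubeRuleExact.sum fun b _ => (hw.cubeRuleExact_monomial fun i => ?_).const_mul _
  exact ((Finset.card_le_univ _).trans_eq (Fintype.card_fin k)).trans_lt hk

theorem cubeRuleExact_taylor (hw : IsInterpolatory w) (F : (ι → ℝ) → ℝ) (a : ι → ℝ) :
    CubeRuleExact w fun v =>
      ∑ k ∈ Finset.range M, (k.factorial : ℝ)⁻¹ • iteratedFDeriv ℝ k F a fun _ => v :=
  CubeRuleExact.sum fun _ hk =>
    (hw.cubeRuleExact_multilinear (Finset.mem_range.1 hk) _).const_mul _

end IsInterpolatory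

/-- The quadrature error of the rule with one-dimensional weights `w` on the unit cube. -/
noncomputable def cubeError (w : Fin M → ℝ) (f : (ι → ℝ) → ℝ) : ℝ :=
  (∫ v in unitCube ι, f v) - cubeRule w f

theorem abs_cubeError_le (hg : IntegrableOn g (unitCube ι)) (hM : 0 < M)
    (h : ∀ v, ‖v‖ ≤ M → |f v| ≤ g v) :
    |cubeError w f| ≤ (∫ v in unitCube ι, g v) + cubeRule (fun j => |w j|) g := by
  have hM_one : (1 : ℝ) ≤ M := Nat.one_le_cast.2 hM
  have h_integral : |∫ v in unitCube ι, f v| ≤ ∫ v in unitCube ι, g v := by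
    refine (Real.norm_eq_abs _).symm.trans_le (norm_integral_le_of_norm_le hg ?_)
    filter_upwards [ae_restrict_mem measurableSet_unitCube] with v hv
    exact h v ((norm_le_one_of_mem_unitCube hv).trans hM_one)
  exact (abs_sub _ _).trans (add_le_add h_integral (abs_cubeRule_le h))

theorem CubeRuleExact.abs_cubeError_le {P : (ι → ℝ) → ℝ} (hP : CubeRuleExact w P) {B : ℝ}
    (hf : IntegrableOn f (unitCube ι)) (hM : 0 < M) (h : ∀ v, ‖v‖ ≤ M → |f v - P v| ≤ B) :
    |cubeError w f| ≤ B * (1 + cubeRule (fun j => |w j|) fun _ : ι → ℝ => 1) := by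
  have h_sub : cubeError w f = cubeError w fun v => f v - P v := by
    rw [cubeError, cubeError, integral_sub hf hP.integrableOn, cubeRule_sub, hP.integral_eq]
    ring
  have h_const : IntegrableOn (fun _ => B * 1) (unitCube ι) :=
    integrableOn_const (by simp [volume_unitCube])
  rw [h_sub]
  refine (_root_.abs_cubeError_le h_const hM (by simpa using h)).trans_eq ?_
  rw [cubeRule_const_mul, setIntegral_const, measureReal_def, volume_unitCube, ENNReal.toReal_one,
    one_smul, mul_add]

end Quadrature

section Taylor

variable {E : Type*} [NormedAddCommGroup E] [NormedSpace ℝ E]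

theorem abs_sub_taylor_le {n : ℕ} {f : E → ℝ} {x y : E} {K : ℝ}
    (hf : ∀ t ∈ Set.Icc (0 : ℝ) 1, ContDiffAt ℝ (n + 1) f (x + t • y))
    (hK : ∀ t ∈ Set.Icc (0 : ℝ) 1, ‖iteratedFDeriv ℝ (n + 1) f (x + t • y)‖ ≤ K) :
    |f (x + y) - ∑ k ∈ Finset.range (n + 1),
        (k.factorial : ℝ)⁻¹ • iteratedFDeriv ℝ k f x fun _ => y| ≤ K * ‖y‖ ^ (n + 1) := by
  have h_integrand : ∀ t ∈ Set.uIoc (0 : ℝ) 1,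
      ‖(1 - t) ^ n • iteratedFDeriv ℝ (n + 1) f (x + t • y) fun _ => y‖ ≤ K * ‖y‖ ^ (n + 1) := by
    intro t ht
    rw [Set.uIoc_of_le zero_le_one] at ht
    have h_weight : ‖(1 - t) ^ n‖ ≤ 1 := by
      rw [norm_pow, Real.norm_of_nonneg (by linarith [ht.2])]
      exact pow_le_one₀ (by linarith [ht.2]) (by linarith [ht.1])
    have h_opNorm := (iteratedFDeriv ℝ (n + 1) f (x + t • y)).le_of_opNorm_le
      (hK t ⟨ht.1.le, ht.2⟩) fun _ => y
    rw [norm_smul]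
    refine (mul_le_of_le_one_left (norm_nonneg _) h_weight).trans ?_
    simpa using h_opNorm
  have h_integral := intervalIntegral.norm_integral_le_of_norm_le_const h_integrand
  rw [sub_zero, abs_one, mul_one] at h_integral
  rw [map_add_eq_sum_add_integral_iteratedFDeriv hf, add_sub_cancel_left, ← Real.norm_eq_abs,
    norm_smul, norm_inv, Real.norm_natCast]
  refine (mul_le_of_le_one_left (norm_nonneg _) (inv_le_one_of_one_le₀ ?_)).trans h_integral
  exact Nat.one_le_cast.2 n.factorial_pos

/-- The segment from `a` to `a + v` stays at distance at least `‖a‖ / 2` from the singularity. -/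
theorem HasPowerBound.abs_sub_taylor_le {M : ℕ} {r C : ℝ} {F : E → ℝ} {a v : E}
    (hF : HasPowerBound M r C F) (hM : 0 < M) (hr : r ≤ M) (ha : 2 * M < ‖a‖) (hv : ‖v‖ ≤ M) :
    |F (a + v) - ∑ k ∈ Finset.range M, (k.factorial : ℝ)⁻¹ • iteratedFDeriv ℝ k F a fun _ => v| ≤
      C * ((‖a‖ / 2) ^ (r - M) * M ^ M) := by
  have ha_pos : 0 < ‖a‖ := (by positivity : (0 : ℝ) ≤ 2 * M).trans_lt ha
  have h_norm : ∀ t ∈ Set.Icc (0 : ℝ) 1, ‖a‖ / 2 ≤ ‖a + t • v‖ := by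
    intro t ht
    have h_step : ‖t • v‖ ≤ M := by
      rw [norm_smul, Real.norm_of_nonneg ht.1]
      exact (mul_le_of_le_one_left (norm_nonneg v) ht.2).trans hv
    linarith [norm_sub_le_norm_add a (t • v)]
  have h_ne : ∀ t ∈ Set.Icc (0 : ℝ) 1, a + t • v ≠ 0 := fun t ht =>
    norm_pos_iff.1 ((half_pos ha_pos).trans_le (h_norm t ht))
  have : Nontrivial E := ⟨a, 0, norm_pos_iff.1 ha_pos⟩
  have hC : 0 ≤ C := hF.nonneg
  obtain ⟨m, rfl⟩ : ∃ m, M = m + 1 := Nat.exists_eq_succ_of_ne_zero hM.ne'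
  rw [← mul_assoc]
  refine (_root_.abs_sub_taylor_le (K := C * (‖a‖ / 2) ^ (r - (m + 1 : ℕ)))
    (fun t ht => hF.contDiffAt _ (h_ne t ht)) fun t ht => ?_).trans (by gcongr)
  refine (hF.norm_iteratedFDeriv_le _ le_rfl _ (h_ne t ht)).trans ?_
  exact mul_le_mul_of_nonneg_left (Real.rpow_le_rpow_of_nonpos (half_pos ha_pos)
    (h_norm t ht) (sub_nonpos.2 hr)) hC

end Taylor

section Lattice

variable {ι : Type*}

/-- The point of the lattice `ℤ ^ ι ⊆ ℝ ^ ι` with coordinates `k`. -/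
def latticePoint (k : ι → ℤ) : ι → ℝ := fun i => k i

variable [Fintype ι]

theorem norm_latticePoint (k : ι → ℤ) : ‖latticePoint k‖ = ‖k‖ := by
  simp only [latticePoint, Pi.norm_def, ← norm_toNNReal, Int.norm_cast_real]

theorem finite_setOf_norm_int_le (R : ℝ) : {k : ι → ℤ | ‖k‖ ≤ R}.Finite := by
  simpa only [Metric.closedBall, dist_zero_right] using
    (isCompact_closedBall (0 : ι → ℤ) R).finite_of_discrete

theorem summable_norm_int_rpow {r : ℝ} (hr : r < -(Fintype.card ι : ℝ)) :
    Summable fun k : ι → ℤ => ‖k‖ ^ r := by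
  let L := Submodule.span ℤ (Set.range (Pi.basisFun ℝ ι))
  have h_mem : ∀ k : ι → ℤ, latticePoint k ∈ L := fun k =>
    ((Pi.basisFun ℝ ι).mem_span_iff_repr_mem ℤ _).2 fun i => ⟨k i, by simp [latticePoint]⟩
  have h_inj : Function.Injective fun k : ι → ℤ => (⟨latticePoint k, h_mem k⟩ : L) := fun k l h =>
    funext fun i => Int.cast_injective (congrFun (congrArg Subtype.val h) i)
  have h_rank : Module.finrank ℤ L = Fintype.card ι := by
    rw [ZLattice.rank ℝ L, Module.finrank_fintype_fun_eq_card]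
  have h_summable := (ZLattice.summable_norm_rpow L r (h_rank ▸ hr)).comp_injective h_inj
  exact h_summable.congr fun k => congrArg (· ^ r) (norm_latticePoint k).symm

theorem finite_support_comp_latticePoint {κ : Type*} [Finite κ] {F : (κ → ℝ) → ℝ}
    (hF : HasCompactSupport F) : (Function.support fun k => F (latticePoint k)).Finite := by
  cases nonempty_fintype κ
  obtain ⟨R, hR⟩ := hF.isBounded.exists_norm_le
  refine (finite_setOf_norm_int_le R).subset fun k hk => ?_
  exact (norm_latticePoint k).symm.trans_le (hR _ (subset_tsupport F hk))

theorem hasSum_setIntegral_unitCube {F : (ι → ℝ) → ℝ} (hF : Integrable F) :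
    HasSum (fun k => ∫ v in unitCube ι, F (latticePoint k + v)) (∫ x, F x) := by
  let cell : (ι → ℤ) → Set (ι → ℝ) := fun k => {x | (fun i => ⌊x i⌋) = k}
  have h_preimage : ∀ k, (fun v => latticePoint k + v) ⁻¹' cell k = unitCube ι := by
    intro k
    ext v
    simp [cell, latticePoint, unitCube, funext_iff, Int.floor_eq_zero_iff]
  have h_meas : ∀ k, MeasurableSet (cell k) := fun k =>
    measurable_pi_lambda (fun (x : ι → ℝ) i => ⌊x i⌋)
      (fun i => Int.measurable_floor.comp (measurable_pi_apply i)) (measurableSet_singleton k)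
  have h_disjoint : Pairwise (Function.onFun Disjoint cell) := fun k l hkl =>
    Set.disjoint_left.2 fun _ hk hl => hkl (hk.symm.trans hl)
  have h_union : ⋃ k, cell k = Set.univ :=
    Set.eq_univ_of_forall fun x => Set.mem_iUnion.2 ⟨fun i => ⌊x i⌋, rfl⟩
  have h_cell : ∀ k, ∫ v in unitCube ι, F (latticePoint k + v) = ∫ x in cell k, F x := by
    intro k
    rw [← h_preimage k]
    exact (measurePreserving_add_left volume (latticePoint k)).setIntegral_preimage_emb
      (measurableEmbedding_addLeft _) F (cell k)
  simp only [h_cell]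
  rw [← setIntegral_univ, ← h_union]
  exact hasSum_integral_iUnion h_meas h_disjoint hF.integrableOn

variable [DecidableEq ι] {M : ℕ} {w : Fin M → ℝ} {F : (ι → ℝ) → ℝ}

/-- Each node is an integer vector, so its translates run through the whole lattice: it contributes
its weight times the full lattice sum, and the weights sum to `1`. -/
theorem IsInterpolatory.hasSum_cubeRule (hw : IsInterpolatory w) (hM : 0 < M)
    (hF : Summable fun k => F (latticePoint k)) :
    HasSum (fun k => cubeRule w fun v => F (latticePoint k + v)) (∑' k, F (latticePoint k)) := by
  have h_node : ∀ J : ι → Fin M, HasSum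
      (fun k => (∏ i, w (J i)) * F (latticePoint k + fun i => ((J i : ℕ) : ℝ)))
      ((∏ i, w (J i)) * ∑' k, F (latticePoint k)) := by
    intro J
    refine HasSum.mul_left _ ?_
    have h_shift := (Equiv.addRight fun i => ((J i : ℕ) : ℤ)).hasSum_iff.2 hF.hasSum
    refine h_shift.congr_fun fun k => congrArg F (funext fun i => ?_)
    simp [latticePoint]
  have h_total : ∑ J : ι → Fin M, ∏ i, w (J i) = 1 := by
    simpa only [cubeRule, mul_one] using hw.cubeRule_one (ι := ι) hM
  have h_sum := hasSum_sum fun J (_ : J ∈ Finset.univ) => h_node J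
  rwa [← Finset.sum_mul, h_total, one_mul] at h_sum

theorem IsInterpolatory.hasSum_cubeError (hw : IsInterpolatory w) (hM : 0 < M)
    (hF_int : Integrable F) (hF_sum : Summable fun k => F (latticePoint k)) :
    HasSum (fun k => cubeError w fun v => F (latticePoint k + v))
      ((∫ x, F x) - ∑' k, F (latticePoint k)) :=
  (hasSum_setIntegral_unitCube hF_int).sub (hw.hasSum_cubeRule hM hF_sum)

end Lattice

section LatticeError

variable {ι : Type*} [Fintype ι] [DecidableEq ι] {M : ℕ} {w : Fin M → ℝ} {r C : ℝ}
  {F : (ι → ℝ) → ℝ} {a : ι → ℝ}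

theorem HasPowerBound.abs_cubeError_le (hF : HasPowerBound M r C F) (hF_int : Integrable F)
    (hw : IsInterpolatory w) (hM : 0 < M) (hr : r ≤ M) (ha : 2 * M < ‖a‖) :
    |cubeError w fun v => F (a + v)| ≤
      C * ((‖a‖ / 2) ^ (r - M) * M ^ M * (1 + cubeRule (fun j => |w j|) fun _ : ι → ℝ => 1)) := by
  refine ((hw.cubeRuleExact_taylor F a).abs_cubeError_le (hF_int.comp_add_left a).integrableOn hM
    fun v hv => hF.abs_sub_taylor_le hM hr ha hv).trans_eq ?_
  ring

theorem exists_summable_abs_cubeError_le [Nonempty ι] (hw : IsInterpolatory w)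
    (hr : -(Fintype.card ι : ℝ) < r) (hrM : r + Fintype.card ι < M) :
    ∃ b : (ι → ℤ) → ℝ, Summable b ∧ ∀ (C : ℝ) (F : (ι → ℝ) → ℝ), HasPowerBound M r C F → F 0 = 0 →
      Integrable F → ∀ k, |cubeError w fun v => F (latticePoint k + v)| ≤ C * b k := by
  have hM : 0 < M := Nat.cast_pos.1 ((by linarith : (0 : ℝ) < r + Fintype.card ι).trans hrM)
  have hr_le : r ≤ M := by linarith [(Fintype.card ι).cast_nonneg (α := ℝ)]
  let near (k : ι → ℤ) : ℝ := (∫ v in unitCube ι, ‖latticePoint k + v‖ ^ r) +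
    cubeRule (fun j => |w j|) fun v => ‖latticePoint k + v‖ ^ r
  let far (k : ι → ℤ) : ℝ := (‖k‖ / 2) ^ (r - M) * M ^ M *
    (1 + cubeRule (fun j => |w j|) fun _ : ι → ℝ => 1)
  have h_far : Summable far := by
    refine Summable.mul_right _ (Summable.mul_right _ ?_)
    simp only [Real.div_rpow (norm_nonneg _) zero_le_two]
    exact (summable_norm_int_rpow (by linarith)).div_const _
  refine ⟨fun k => if ‖k‖ ≤ 2 * M then near k else far k, h_far.congr_cofinite ?_, ?_⟩
  · filter_upwards [(finite_setOf_norm_int_le (2 * M)).compl_mem_cofinite] with k hk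
    exact (if_neg hk).symm
  intro C F hF hF_zero hF_int k
  dsimp only
  split_ifs with hk
  · have h_abs : ∀ y, |F y| ≤ C * ‖y‖ ^ r := by
      intro y
      rcases eq_or_ne y 0 with rfl | hy
      · rw [hF_zero, abs_zero]
        exact mul_nonneg hF.nonneg (by positivity)
      · exact hF.abs_le hy
    refine (abs_cubeError_le ((integrableOn_unitCube_norm_add_rpow hr _).const_mul C) hM
      fun v _ => h_abs _).trans_eq ?_
    rw [integral_const_mul, cubeRule_const_mul, ← mul_add]
  · simpa only [far, norm_latticePoint] using hF.abs_cubeError_le hF_int hw hM hr_le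
      (a := latticePoint k) (by rw [norm_latticePoint]; exact not_le.1 hk)

end LatticeError

theorem exists_abs_integral_sub_tsum_le {ι : Type*} [Fintype ι] [Nonempty ι] {M : ℕ} {r : ℝ}
    (hr : -(Fintype.card ι : ℝ) < r) (hrM : r + Fintype.card ι < M) :
    ∃ K, ∀ (C : ℝ) (F : (ι → ℝ) → ℝ), HasCompactSupport F → HasPowerBound M r C F → F 0 = 0 →
      |(∫ x, F x) - ∑' k, F (latticePoint k)| ≤ C * K := by
  classical
  obtain ⟨w, hw⟩ := exists_isInterpolatory M
  obtain ⟨b, hb_summable, hb⟩ := exists_summable_abs_cubeError_le hw hr hrM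
  refine ⟨∑' k, b k, fun C F hF_supp hF hF_zero => ?_⟩
  have hM : 0 < M := Nat.cast_pos.1 ((by linarith : (0 : ℝ) < r + Fintype.card ι).trans hrM)
  have hF_int : Integrable F := hF.integrable hF_supp (by simpa using hr)
  have hF_sum : Summable fun k => F (latticePoint k) :=
    summable_of_hasFiniteSupport (finite_support_comp_latticePoint hF_supp)
  rw [← (hw.hasSum_cubeError hM hF_int hF_sum).tsum_eq, ← tsum_mul_left]
  simp only [← Real.norm_eq_abs] at hb ⊢
  exact tsum_of_norm_bounded (hb_summable.mul_left C).hasSum (hb C F hF hF_zero hF_int)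

section Scaling

variable {n : ℕ} {f : (Fin n → ℝ) → ℝ}

theorem trap_eq_tsum (h : ℝ) (hf : f 0 = 0) :
    trap h f = h ^ n * ∑' k : Fin n → ℤ, f (h • latticePoint k) := by
  have h_support :
      Function.support (fun k : Fin n → ℤ => f (h • latticePoint k)) ⊆ {k | k ≠ 0} := by
    rintro _ hk rfl
    have h_zero : h • latticePoint (0 : Fin n → ℤ) = 0 := by
      ext
      simp [latticePoint]
    exact hk ((congrArg f h_zero).trans hf)
  rw [← tsum_subtype_eq_of_support_subset h_support]
  simp only [trap, latticePoint, Pi.smul_def, smul_eq_mul, mul_comm h]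
  rfl

theorem exists_abs_integral_sub_trap_le [NeZero n] {M : ℕ} {σ C : ℝ} (hσ : 0 < σ) (hσM : σ < M)
    (hf_supp : HasCompactSupport f) (hf : HasPowerBound M (σ - n) C f) (hf_zero : f 0 = 0) :
    ∃ C' > 0, ∀ h > 0, |(∫ x, f x) - trap h f| ≤ C' * h ^ σ := by
  obtain ⟨K, hK⟩ := exists_abs_integral_sub_tsum_le (ι := Fin n) (M := M) (r := σ - n)
    (by simpa using hσ) (by simpa using hσM)
  refine ⟨|C * K| + 1, by positivity, fun h hh => ?_⟩
  have h_supp : HasCompactSupport fun y => h ^ (-(σ - n)) * f (h • y) :=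
    (hf_supp.comp_smul hh.ne').mul_left
  have h_unit := hK C _ h_supp (hf.rescale hh) (by simp [hf_zero])
  have h_pow : h ^ (-(σ - n)) = h ^ (-σ) * h ^ n := by
    rw [← Real.rpow_natCast, ← Real.rpow_add hh]
    ring_nf
  have h_integral : ∫ y, f (h • y) = (h ^ n)⁻¹ * ∫ x, f x := by
    rw [Measure.integral_comp_smul, Module.finrank_fin_fun, abs_of_pos (by positivity), smul_eq_mul]
  have h_rescale : (∫ y, h ^ (-(σ - n)) * f (h • y)) -
      ∑' k : Fin n → ℤ, h ^ (-(σ - n)) * f (h • latticePoint k) =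
        h ^ (-σ) * ((∫ x, f x) - trap h f) := by
    rw [integral_const_mul, tsum_mul_left, h_integral, trap_eq_tsum h hf_zero, h_pow]
    field_simp
  rw [h_rescale, abs_mul, abs_of_pos (by positivity), Real.rpow_neg hh.le,
    inv_mul_le_iff₀ (by positivity), mul_comm] at h_unit
  exact h_unit.trans (by gcongr; exact (le_abs_self _).trans (lt_add_one _).le)

end Scaling

section PartialDerivatives

variable {n : ℕ} {f : (Fin n → ℝ) → ℝ}

/-- The partial derivative of `f` along the coordinate directions listed in `l`, the last entry
being applied first; `md γ` is the case of a sorted list. -/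
noncomputable def listPd (l : List (Fin n)) (f : (Fin n → ℝ) → ℝ) : (Fin n → ℝ) → ℝ :=
  l.foldr pd f

theorem pd_comm (hf : ContDiff ℝ 2 f) (i j : Fin n) : pd i (pd j f) = pd j (pd i f) := by
  have h_second : ∀ x i j, pd i (pd j f) x =
      fderiv ℝ (fderiv ℝ f) x (Pi.single i 1) (Pi.single j 1) := by
    intro x i j
    have h_diff : DifferentiableAt ℝ (fderiv ℝ f) x :=
      (hf.fderiv_right (m := 1) (by norm_num)).contDiffAt.differentiableAt one_ne_zero
    unfold pd
    rw [fderiv_clm_apply h_diff (differentiableAt_const _)]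
    simp
  funext x
  rw [h_second, h_second]
  exact (hf.contDiffAt.isSymmSndFDerivAt (by simp)).eq _ _

theorem contDiff_listPd (l : List (Fin n)) {m : ℕ} (hf : ContDiff ℝ (l.length + m : ℕ) f) :
    ContDiff ℝ m (listPd l f) := by
  induction l generalizing m with
  | nil => simpa [listPd] using hf
  | cons i l ih =>
    have h_tail : ContDiff ℝ (m + 1 : ℕ) (listPd l f) :=
      ih (by rwa [List.length_cons, add_right_comm, add_assoc] at hf)
    exact (h_tail.fderiv_right (m := m) (by norm_cast)).clm_apply contDiff_const

theorem listPd_eq_of_perm {l l' : List (Fin n)} (h : l.Perm l')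
    (hf : ContDiff ℝ l.length f) : listPd l f = listPd l' f := by
  induction h with
  | nil => rfl
  | cons i _ ih => exact congrArg (pd i) (ih (hf.of_le (by simp)))
  | swap i j l => exact pd_comm (contDiff_listPd l hf) j i
  | trans h₁ _ ih₁ ih₂ => exact (ih₁ hf).trans (ih₂ (h₁.length_eq ▸ hf))

theorem md_eq_listPd (γ : Fin n → ℕ) (f : (Fin n → ℝ) → ℝ) :
    md γ f = listPd ((List.finRange n).flatMap fun j => List.replicate (γ j) j) f := by
  unfold md listPd
  rw [List.foldr_flatMap]
  congr
  funext j g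
  induction γ j with
  | zero => rfl
  | succ k ih => rw [Function.iterate_succ_apply', ih, List.replicate_succ, List.foldr_cons]

theorem listPd_eq_md_count (l : List (Fin n)) (hf : ContDiff ℝ l.length f) :
    listPd l f = md (fun j => l.count j) f := by
  rw [md_eq_listPd]
  refine listPd_eq_of_perm (List.perm_iff_count.2 fun j => ?_) hf
  rw [List.count_flatMap, ← Fin.sum_univ_def]
  simp [List.count_replicate]

theorem iteratedFDeriv_apply_single {k : ℕ} (hf : ContDiff ℝ k f) (b : Fin k → Fin n)
    (x : Fin n → ℝ) :
    iteratedFDeriv ℝ k f x (fun l => Pi.single (b l) 1) = listPd (List.ofFn b) f x := by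
  induction k generalizing x with
  | zero => simp [listPd]
  | succ k ih =>
    have h_tail := ih (hf.of_le (by norm_cast; exact k.le_succ)) fun l => b l.succ
    have h_diff : DifferentiableAt ℝ (iteratedFDeriv ℝ k f) x :=
      hf.contDiffAt.differentiableAt_iteratedFDeriv (by norm_cast; exact k.lt_succ_self)
    rw [iteratedFDeriv_succ_apply_left, List.ofFn_succ]
    change _ = fderiv ℝ (listPd (List.ofFn fun l => b l.succ) f) x (Pi.single (b 0) 1)
    rw [← funext h_tail, fderiv_continuousMultilinear_apply_const_apply h_diff]
    rfl

theorem iteratedFDeriv_eq_zero_of_md_eq_zero {k : ℕ} (hf : ContDiff ℝ k f) {x : Fin n → ℝ}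
    (h : ∀ γ : Fin n → ℕ, ∑ j, γ j = k → md γ f x = 0) : iteratedFDeriv ℝ k f x = 0 := by
  apply ContinuousMultilinearMap.toMultilinearMap_injective
  refine Module.Basis.ext_multilinear (fun _ => Pi.basisFun ℝ (Fin n)) fun b => ?_
  have h_length : (List.ofFn b).length = k := List.length_ofFn
  simp only [Pi.basisFun_apply]
  refine (iteratedFDeriv_apply_single hf b x).trans ?_
  rw [listPd_eq_md_count _ (h_length.symm ▸ hf)]
  have h_count : ∑ j, (List.ofFn b).count j = (List.ofFn b).length := by
    simpa using Multiset.sum_count_eq_card (s := Finset.univ)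
      (m := (List.ofFn b : Multiset (Fin n))) (by simp)
  exact h _ (h_count.trans h_length)

end PartialDerivatives

section FlatFunctions

variable {E : Type*} [NormedAddCommGroup E] [NormedSpace ℝ E] {g : E → ℝ}

theorem exists_norm_iteratedFDeriv_le {N : ℕ} (hg : ContDiff ℝ N g) (hgc : HasCompactSupport g) :
    ∃ C, 0 ≤ C ∧ ∀ i ≤ N, ∀ x, ‖iteratedFDeriv ℝ i g x‖ ≤ C := by
  have h_each : ∀ i ≤ N, ∃ C, ∀ x, ‖iteratedFDeriv ℝ i g x‖ ≤ C := fun i hi =>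
    (hgc.iteratedFDeriv i).exists_bound_of_continuous
      (hg.continuous_iteratedFDeriv (Nat.cast_le.2 hi))
  choose! c hc using h_each
  obtain ⟨C, hC⟩ := ((Finset.range (N + 1)).image c).exists_le
  have h_le : ∀ i ≤ N, ∀ x, ‖iteratedFDeriv ℝ i g x‖ ≤ C := fun i hi x =>
    (hc i hi x).trans (hC _ (Finset.mem_image_of_mem c (Finset.mem_range_succ_iff.2 hi)))
  exact ⟨C, (norm_nonneg _).trans (h_le 0 N.zero_le 0), h_le⟩

theorem norm_iteratedFDeriv_le_pow_succ {i d : ℕ} {C : ℝ} (hC : 0 ≤ C)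
    (hg : ContDiff ℝ (i + 1 : ℕ) g) (h_zero : iteratedFDeriv ℝ i g 0 = 0)
    (h : ∀ x, ‖iteratedFDeriv ℝ (i + 1) g x‖ ≤ C * ‖x‖ ^ d) (x : E) :
    ‖iteratedFDeriv ℝ i g x‖ ≤ C * ‖x‖ ^ (d + 1) := by
  have h_diff : Differentiable ℝ (iteratedFDeriv ℝ i g) :=
    hg.differentiable_iteratedFDeriv (by norm_cast; exact i.lt_succ_self)
  have h_ball : ∀ y ∈ Metric.closedBall (0 : E) ‖x‖,
      ‖fderiv ℝ (iteratedFDeriv ℝ i g) y‖ ≤ C * ‖x‖ ^ d := by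
    intro y hy
    rw [norm_fderiv_iteratedFDeriv]
    exact (h y).trans (by gcongr; exact mem_closedBall_zero_iff.1 hy)
  have h_mvt := (convex_closedBall (0 : E) ‖x‖).norm_image_sub_le_of_norm_fderiv_le
    (fun y _ => h_diff y) h_ball (Metric.mem_closedBall_self (norm_nonneg x))
    (mem_closedBall_zero_iff.2 le_rfl)
  rwa [h_zero, sub_zero, sub_zero, mul_assoc, ← pow_succ] at h_mvt

theorem norm_iteratedFDeriv_le_pow {q : ℕ} {C : ℝ} (hC : 0 ≤ C) (hg : ContDiff ℝ q g)
    (h_zero : ∀ i < q, iteratedFDeriv ℝ i g 0 = 0) (h : ∀ x, ‖iteratedFDeriv ℝ q g x‖ ≤ C)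
    {i d : ℕ} (hid : i + d = q) (x : E) : ‖iteratedFDeriv ℝ i g x‖ ≤ C * ‖x‖ ^ d := by
  induction d generalizing i x with
  | zero =>
    subst hid
    simpa using h x
  | succ d ih =>
    exact norm_iteratedFDeriv_le_pow_succ hC (hg.of_le (Nat.cast_le.2 (by omega)))
      (h_zero i (by omega)) (fun y => ih (by omega) y) x

theorem exists_hasPowerBound_of_iteratedFDeriv_eq_zero {q N : ℕ} (hqN : q ≤ N)
    (hg : ContDiff ℝ N g) (hgc : HasCompactSupport g)
    (h_zero : ∀ i < q, iteratedFDeriv ℝ i g 0 = 0) : ∃ C, HasPowerBound N q C g := by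
  obtain ⟨C, hC, h_bound⟩ := exists_norm_iteratedFDeriv_le hg hgc
  obtain ⟨R, h_supp⟩ := hgc.isBounded.exists_norm_le
  have hR_one : 1 ≤ max R 1 := le_max_right R 1
  refine ⟨C * max R 1 ^ N, fun x _ => hg.contDiffAt, fun i hi x hx => ?_⟩
  have hx_pos : 0 < ‖x‖ := norm_pos_iff.2 hx
  rcases le_total i q with hiq | hqi
  · rw [← Nat.cast_sub hiq, Real.rpow_natCast]
    have h_flat := norm_iteratedFDeriv_le_pow hC (hg.of_le (Nat.cast_le.2 hqN)) h_zero
      (h_bound q hqN) (Nat.add_sub_cancel' hiq) x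
    exact h_flat.trans (by gcongr; exact le_mul_of_one_le_right hC (one_le_pow₀ hR_one))
  by_cases hx_supp : x ∈ tsupport g
  · have h_pow : ‖x‖ ^ (i - q) ≤ max R 1 ^ N := calc
      ‖x‖ ^ (i - q) ≤ max R 1 ^ (i - q) := by
        gcongr
        exact (h_supp x hx_supp).trans (le_max_left R 1)
      _ ≤ max R 1 ^ N := pow_le_pow_right₀ hR_one (by omega)
    have h_exp : (q : ℝ) - i = -((i - q : ℕ) : ℝ) := by
      rw [Nat.cast_sub hqi, neg_sub]
    rw [h_exp, Real.rpow_neg hx_pos.le, Real.rpow_natCast, ← div_eq_mul_inv,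
      le_div_iff₀ (by positivity)]
    exact mul_le_mul (h_bound i hi x) h_pow (by positivity) hC
  · have h_vanish : iteratedFDeriv ℝ i g x = 0 :=
      Function.notMem_support.1 fun hx => hx_supp (support_iteratedFDeriv_subset i hx)
    rw [h_vanish, norm_zero]
    positivity

end FlatFunctions

section Kernel

variable {n : ℕ}

/-- The singular kernel `s_{ij}(x) = x_i x_j / |x| ^ (n + α)`; division by zero makes its value at
the origin `0`. -/
noncomputable def singularKernel (i j : Fin n) (α : ℝ) (x : Fin n → ℝ) : ℝ :=
  x i * x j / euclNorm x ^ ((n : ℝ) + α)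

theorem euclNorm_eq_norm_toLp (x : Fin n → ℝ) : euclNorm x = ‖WithLp.toLp 2 x‖ := by
  simp [euclNorm, EuclideanSpace.norm_eq]

theorem euclNorm_smul {t : ℝ} (ht : 0 ≤ t) (x : Fin n → ℝ) :
    euclNorm (t • x) = t * euclNorm x := by
  simp only [euclNorm_eq_norm_toLp, WithLp.toLp_smul, norm_smul, Real.norm_of_nonneg ht]

theorem singularKernel_zero (i j : Fin n) (α : ℝ) : singularKernel i j α 0 = 0 := by
  simp [singularKernel]

theorem contDiffAt_singularKernel (i j : Fin n) (α : ℝ) {M : WithTop ℕ∞} {x : Fin n → ℝ}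
    (hx : x ≠ 0) : ContDiffAt ℝ M (singularKernel i j α) x := by
  have h_toLp : WithLp.toLp 2 x ≠ 0 := (WithLp.toLp_eq_zero 2).not.2 hx
  have h_norm : ContDiffAt ℝ M (euclNorm : (Fin n → ℝ) → ℝ) x := by
    rw [funext euclNorm_eq_norm_toLp]
    exact (contDiffAt_norm ℝ h_toLp).comp x PiLp.contDiff_toLp.contDiffAt
  have h_pos : 0 < euclNorm x := by
    rw [euclNorm_eq_norm_toLp]
    exact norm_pos_iff.2 h_toLp
  exact ((contDiff_apply ℝ ℝ i).mul (contDiff_apply ℝ ℝ j)).contDiffAt.div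
    (h_norm.rpow_const_of_ne h_pos.ne') (Real.rpow_pos_of_pos h_pos _).ne'

theorem singularKernel_smul (i j : Fin n) (α : ℝ) {t : ℝ} (ht : 0 < t) (x : Fin n → ℝ) :
    singularKernel i j α (t • x) = t ^ (2 - (n + α)) * singularKernel i j α x := by
  have h_nonneg : 0 ≤ euclNorm x := Real.sqrt_nonneg _
  unfold singularKernel
  rw [euclNorm_smul ht.le, Real.mul_rpow ht.le h_nonneg, Real.rpow_sub ht, Real.rpow_two]
  simp only [Pi.smul_apply, smul_eq_mul]
  field_simp

end Kernel

theorem off_diagonal_punctured_trapezoidal_order_general {n : ℕ} (i j : Fin n) {q : ℕ} {α : ℝ}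
    (hα : 0 < α) (hαq : α < q + 2) {g : (Fin n → ℝ) → ℝ} (hg : ContDiff ℝ (q + 2 : ℕ) g)
    (hgc : HasCompactSupport g) (hgd : ∀ k : Fin n → ℕ, ∑ l, k l < q → md k g 0 = 0) :
    ∃ C > 0, ∀ h > 0, |(∫ x, g x * singularKernel i j α x) -
      trap h fun x => g x * singularKernel i j α x| ≤ C * h ^ ((q : ℝ) + 2 - α) := by
  have : NeZero n := ⟨i.pos.ne'⟩
  have h_flat : ∀ k < q, iteratedFDeriv ℝ k g 0 = 0 := fun k hk =>
    iteratedFDeriv_eq_zero_of_md_eq_zero (hg.of_le (Nat.cast_le.2 (by omega)))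
      fun γ hγ => hgd γ (hγ.trans_lt hk)
  obtain ⟨C, hC⟩ := exists_hasPowerBound_of_iteratedFDeriv_eq_zero (by omega) hg hgc h_flat
  obtain ⟨D, hD⟩ := exists_hasPowerBound_of_homogeneous (M := q + 2)
    (fun x hx => contDiffAt_singularKernel i j α hx) fun t ht => singularKernel_smul i j α ht
  have h_prod := hC.mul hD
  rw [show (q : ℝ) + (2 - (n + α)) = q + 2 - α - n by ring] at h_prod
  exact exists_abs_integral_sub_trap_le (by linarith) (by push_cast; linarith) hgc.mul_right
    h_prod (by simp [singularKernel_zero])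

/-- order of convergence of the punctured-hole trapezoidal rule for `g·s₁₂`
with the off-diagonal singular kernel, when all derivatives of `g` up to order `2p-1`
vanish at the origin. -/
theorem off_diagonal_punctured_trapezoidal_order
    (n : ℕ) (hn : 2 ≤ n) (p : ℕ) (hp : 1 ≤ p) (α : ℝ) (hα0 : 0 < α) (hα2 : α < 2)
    (Nsm : ℕ) (hNsm : max (2 * p + 2) (n + 1) ≤ Nsm)
    (g : (Fin n → ℝ) → ℝ) (hg : ContDiff ℝ (Nsm : ℕ∞) g) (hgc : HasCompactSupport g)
    (hgd : ∀ k : Fin n → ℕ, ∑ j, k j ≤ 2 * p - 1 → md k g 0 = 0) :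
    ∃ C > (0:ℝ), ∀ h : ℝ, 0 < h → h ≤ 1 →
      |(∫ x : Fin n → ℝ,
            g x * (x ⟨0, by omega⟩ * x ⟨1, by omega⟩ / euclNorm x ^ ((n : ℝ) + α))) -
          trap h (fun x =>
            g x * (x ⟨0, by omega⟩ * x ⟨1, by omega⟩ / euclNorm x ^ ((n : ℝ) + α)))| ≤
        C * h ^ (2 * (p : ℝ) + 2 - α) := by
  have h_smooth : ContDiff ℝ (2 * p + 2 : ℕ) g :=
    hg.of_le (Nat.cast_le.2 ((le_max_left _ _).trans hNsm))
  have hα : α < (2 * p : ℕ) + 2 := by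
    linarith [(2 * p).cast_nonneg (α := ℝ)]
  obtain ⟨C, hC, h_le⟩ := off_diagonal_punctured_trapezoidal_order_general ⟨0, by omega⟩
    ⟨1, by omega⟩ hα0 hα h_smooth hgc fun k hk => hgd k (by omega)
  refine ⟨C, hC, fun h hh _ => ?_⟩
  simpa only [singularKernel, Nat.cast_mul, Nat.cast_ofNat] using h_le h hh
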